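/- For each even integer m with 4 ≤ m ≤ 4t, the number of irreducible codewords of weight m in C_b equals (1/m)·∏_{i=0}^{m/2−1} (2t − i)². -/

import Mathlib

open Finset Matrix

/-- Column index set of the base matrix `H_b`: all binary vectors of length `4t`
of Hamming weight two whose two nonzero positions differ by an odd number. -/
def colIdx (t : ℕ) := {p : Fin (4*t) × Fin (4*t) // p.1 < p.2 ∧ Odd (p.2.val - p.1.val)}

instance (t : ℕ) : Fintype (colIdx t) := by unfold colIdx; infer_instance

instance (t : ℕ) : DecidableEq (colIdx t) := by unfold colIdx; infer_instance

/-- The base matrix `H_b` of the FDPC construction. -/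
def Hb (t : ℕ) : Matrix (Fin (4*t)) (colIdx t) (ZMod 2) :=
  fun r c => if r = c.1.1 ∨ r = c.1.2 then 1 else 0

/-- Hamming weight of a vector. -/
def wt {ι : Type*} [Fintype ι] (x : ι → ZMod 2) : ℕ :=
  (Finset.univ.filter fun i => x i ≠ 0).card

/-- A codeword of `C_b = ker H_b` is *irreducible* if it is nonzero and cannot be
written as the sum of two nonzero codewords with disjoint supports (equivalently,
the subgraph of the Tanner graph induced by its support is a single cycle). -/
def Irred (t : ℕ) (x : colIdx t → ZMod 2) : Prop :=
  Hb t *ᵥ x = 0 ∧ x ≠ 0 ∧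
  ¬ ∃ a b : colIdx t → ZMod 2, Hb t *ᵥ a = 0 ∧ Hb t *ᵥ b = 0 ∧ a ≠ 0 ∧ b ≠ 0 ∧
      (∀ c, a c = 0 ∨ b c = 0) ∧ x = a + b


section cyc
set_option linter.unusedSectionVars false
variable {V C : Type} [Fintype V] [DecidableEq V] [Fintype C] [DecidableEq C]

def EvenSet (ed : C → Sym2 V) (S : Finset C) : Prop := ∀ v, Even (#{c ∈ S | v ∈ ed c})

def MinSet (ed : C → Sym2 V) (S : Finset C) : Prop :=
  EvenSet ed S ∧ S.Nonempty ∧ ∀ T ⊆ S, T.Nonempty → EvenSet ed T → T = S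

/-- `v` is a cycle with edge sequence `e`. -/
structure IsCyc (ed : C → Sym2 V) {p : ℕ} (v : ZMod p → V) (e : ZMod p → C) : Prop where
  inj : Function.Injective v
  edge : ∀ i, ed (e i) = s(v i, v (i+1))

variable {ed : C → Sym2 V} {p : ℕ} {v : ZMod p → V} {e : ZMod p → C}

lemma two_ne (hp : 3 ≤ p) : (2 : ZMod p) ≠ 0 := by
  intro h
  have : ((2 : ℕ) : ZMod p) = 0 := by exact_mod_cast h
  rw [ZMod.natCast_eq_zero_iff] at this
  have := Nat.le_of_dvd (by norm_num) this
  omega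

lemma one_ne (hp : 3 ≤ p) : (1 : ZMod p) ≠ 0 := by
  intro h
  apply two_ne hp
  linear_combination 2 * h

lemma IsCyc.einj (h : IsCyc ed v e) (hp : 3 ≤ p) : Function.Injective e := by
  intro i j hij
  have h1 := h.edge i
  rw [hij, h.edge j, Sym2.eq_iff] at h1
  rcases h1 with ⟨h1, _⟩ | ⟨h1, h2⟩
  · exact (h.inj h1).symm
  · have h1 := h.inj h1
    have h2 := h.inj h2
    exact absurd (by linear_combination h2 - h1) (two_ne hp)

lemma IsCyc.mem (h : IsCyc ed v e) (i j : ZMod p) : v j ∈ ed (e i) ↔ (i = j ∨ i = j - 1) := by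
  rw [h.edge, Sym2.mem_iff, h.inj.eq_iff, h.inj.eq_iff, eq_sub_iff_add_eq]
  constructor <;> rintro (h | h) <;> simp [h]

lemma IsCyc.even [NeZero p] (h : IsCyc ed v e) (hp : 3 ≤ p) : EvenSet ed (univ.image e) := by
  intro u
  by_cases hu : ∃ j, v j = u
  · obtain ⟨j, rfl⟩ := hu
    have : ({c ∈ univ.image e | v j ∈ ed c} : Finset C) = {e j, e (j-1)} := by
      ext c
      simp only [mem_filter, mem_image, mem_univ, true_and, mem_insert, mem_singleton]
      constructor
      · rintro ⟨⟨i, rfl⟩, hi⟩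
        rcases (h.mem i j).1 hi with rfl | rfl <;> simp
      · rintro (rfl | rfl)
        · exact ⟨⟨_, rfl⟩, (h.mem _ _).2 (Or.inl rfl)⟩
        · exact ⟨⟨_, rfl⟩, (h.mem _ _).2 (Or.inr rfl)⟩
    rw [this, card_pair]
    · norm_num
    · intro hh
      have := h.einj hp hh
      exact one_ne hp (by linear_combination this)
  · have : ({c ∈ univ.image e | u ∈ ed c} : Finset C) = ∅ := by
      ext c
      simp only [mem_filter, mem_image, mem_univ, true_and, notMem_empty, iff_false]
      rintro ⟨⟨i, rfl⟩, hi⟩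
      rw [h.edge, Sym2.mem_iff] at hi
      rcases hi with rfl | rfl <;> exact hu ⟨_, rfl⟩
    rw [this]; simp

lemma zmod_ind [NeZero p] (P : ZMod p → Prop) (h0 : P 0) (h : ∀ i, P i → P (i+1)) : ∀ i, P i := by
  intro i
  have : ∀ n : ℕ, P (n : ZMod p) := by
    intro n
    induction n with
    | zero => simpa using h0
    | succ n ih => simpa using h _ ih
  simpa using this i.val

lemma IsCyc.min [NeZero p] (h : IsCyc ed v e) (hp : 3 ≤ p) : MinSet ed (univ.image e) := by
  refine ⟨h.even hp, ⟨e 0, by simp⟩, ?_⟩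
  intro T hT hne hev
  have key : ∀ i, e i ∈ T → e (i+1) ∈ T := by
    intro i hi
    by_contra hc
    have h1 := hev (v (i+1))
    have : ({c ∈ T | v (i+1) ∈ ed c} : Finset C) = {e i} := by
      ext c
      simp only [mem_filter, mem_singleton]
      constructor
      · rintro ⟨hcT, hv⟩
        obtain ⟨j, -, rfl⟩ := mem_image.1 (hT hcT)
        rcases (h.mem _ _).1 hv with rfl | rfl
        · exact absurd hcT hc
        · simp
      · rintro rfl
        exact ⟨hi, (h.mem _ _).2 (by simp)⟩
    rw [this] at h1
    simp at h1
  obtain ⟨c, hc⟩ := hne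
  obtain ⟨j, -, rfl⟩ := mem_image.1 (hT hc)
  have := zmod_ind (fun i => e (j + i) ∈ T) (by simpa using hc) (fun i hi => by
    simpa [add_assoc] using key _ hi)
  apply Subset.antisymm hT
  intro c hc
  obtain ⟨i, -, rfl⟩ := mem_image.1 hc
  simpa using this (i - j)

lemma IsCyc.card [NeZero p] (h : IsCyc ed v e) (hp : 3 ≤ p) : #(univ.image e) = p := by
  rw [card_image_of_injective _ (h.einj hp)]; simp [ZMod.card]

lemma IsCyc.unique [NeZero p] {v' : ZMod p → V} {e' : ZMod p → C}
    (h : IsCyc ed v e) (h' : IsCyc ed v' e') (hp : 3 ≤ p)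
    (hE : univ.image e = univ.image e') (h0 : v 0 = v' 0) (h1 : v 1 = v' 1) : v = v' := by
  have := zmod_ind (fun i => v i = v' i ∧ v (i+1) = v' (i+1)) (by simpa using ⟨h0, h1⟩) (by
    rintro i ⟨a, b⟩
    refine ⟨b, ?_⟩
    have hm : e (i+1) ∈ univ.image e' := by rw [← hE]; simp
    obtain ⟨j, -, hj⟩ := mem_image.1 hm
    have h2 := h.edge (i+1)
    have h3 : v' (i+1) ∈ ed (e' j) := by rw [hj, h2, b]; simp
    have h4 := h'.edge j
    rw [hj, h2] at h4
    rcases (h'.mem _ _).1 h3 with rfl | rfl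
    · rw [b] at h4
      exact Sym2.congr_right.1 h4
    · simp only [add_sub_cancel_right] at h4
      rw [b, Sym2.eq_swap] at h4
      have : v (i+1+1) = v' i := Sym2.congr_left.1 h4
      rw [← a] at this
      have := h.inj this
      exact absurd (by linear_combination this) (two_ne hp))
  funext i
  exact (this i).1

lemma exists_cyc (hinj : Function.Injective ed) (hloop : ∀ c, ¬ (ed c).IsDiag)
    {S : Finset C} (hS : MinSet ed S) {c : C} (hc : c ∈ S)
    {a b : V} (hab : ed c = s(a, b)) :
    ∃ (p : ℕ) (_ : NeZero p) (v : ZMod p → V) (e : ZMod p → C), 3 ≤ p ∧ IsCyc ed v e ∧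
      univ.image e = S ∧ v 0 = a ∧ v 1 = b := by
  have step : ∀ d : {d : V × V // ∃ c ∈ S, ed c = s(d.1, d.2)},
      ∃ d' : {d : V × V // ∃ c ∈ S, ed c = s(d.1, d.2)}, d'.1.1 = d.1.2 ∧ d'.1.2 ≠ d.1.1 := by
    rintro ⟨⟨x, y⟩, c, hc, hxy⟩
    simp only at hxy
    have hev := hS.1 y
    have hmem : c ∈ ({c ∈ S | y ∈ ed c} : Finset C) := by simp [hc, hxy]
    have : 1 < #{c ∈ S | y ∈ ed c} := by
      have := card_pos.2 ⟨c, hmem⟩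
      rcases hev with ⟨r, hr⟩
      omega
    obtain ⟨c', hc', hne⟩ := exists_mem_ne this c
    simp only [mem_filter] at hc'
    obtain ⟨z, hz⟩ := Sym2.mem_iff_exists.1 hc'.2
    refine ⟨⟨(y, z), c', hc'.1, hz⟩, rfl, ?_⟩
    intro hzx
    have hzx : z = x := hzx
    apply hne
    apply hinj
    rw [hz, hxy, Sym2.eq_swap, hzx]
  choose nx hnx1 hnx2 using step
  let D : ℕ → {d : V × V // ∃ c ∈ S, ed c = s(d.1, d.2)} :=
    fun n => nx^[n] ⟨(a, b), c, hc, hab⟩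
  have hD : ∀ n, D (n+1) = nx (D n) := fun n => Function.iterate_succ_apply' _ _ _
  let w : ℕ → V := fun n => (D n).1.1
  have hw1 : ∀ n, w (n+1) = (D n).1.2 := by
    intro n; simp only [w, hD, hnx1]
  have hw2 : ∀ n, w (n+2) ≠ w n := by
    intro n; rw [hw1, hD]; exact hnx2 _
  have hwe : ∀ n, ∃ c ∈ S, ed c = s(w n, w (n+1)) := by
    intro n; rw [hw1]; exact (D n).2
  have hw0 : w 0 = a := rfl
  have hw1' : w 1 = b := by rw [hw1]; rfl
  clear_value w
  choose f hfS hf using hwe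
  have hex : ∃ j, ∃ i < j, w i = w j := by
    obtain ⟨x, y, hne, hxy⟩ := Finite.exists_ne_map_eq_of_infinite w
    rcases lt_or_gt_of_ne hne with h | h
    · exact ⟨y, x, h, hxy⟩
    · exact ⟨x, y, h, hxy.symm⟩
  classical
  obtain ⟨i, hij, hwij⟩ := Nat.find_spec hex
  have hmin : ∀ x y, x < Nat.find hex → y < Nat.find hex → w x = w y → x = y := by
    intro x y hx hy hxy
    by_contra hne
    rcases lt_or_gt_of_ne hne with h | h
    · exact Nat.find_min hex hy ⟨x, h, hxy⟩
    · exact Nat.find_min hex hx ⟨y, h, hxy.symm⟩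
  generalize Nat.find hex = j at *
  obtain ⟨p, rfl⟩ := Nat.exists_eq_add_of_lt hij
  have hp : 3 ≤ p + 1 := by
    by_contra hlt
    have : p = 0 ∨ p = 1 := by omega
    rcases this with rfl | rfl
    · apply hloop (f i); rw [hf]; simpa using hwij
    · exact hw2 i hwij.symm
  let u : ZMod (p+1) → V := fun x => w (i + x.val)
  let e : ZMod (p+1) → C := fun x => f (i + x.val)
  have hcyc : IsCyc ed u e := by
    constructor
    · intro x y hxy
      have hx := x.val_lt
      have hy := y.val_lt
      have := hmin _ _ (by omega) (by omega) hxy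
      exact ZMod.val_injective _ (by omega)
    · intro x
      simp only [u, e, hf]
      suffices hh : w (i + x.val + 1) = w (i + (x + 1).val) by rw [hh]
      have hx := x.val_lt
      rw [ZMod.val_add, ZMod.val_one'' (by omega)]
      rcases Nat.lt_or_ge (x.val + 1) (p+1) with h | h
      · rw [Nat.mod_eq_of_lt h]; rfl
      · have : x.val = p := by omega
        rw [this, Nat.mod_self]; simpa only [add_zero] using hwij.symm
  have hE : univ.image e = S := by
    apply hS.2.2
    · intro c hc
      obtain ⟨x, -, rfl⟩ := mem_image.1 hc
      exact hfS _
    · exact ⟨e 0, by simp⟩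
    · exact hcyc.even hp
  have hi : i = 0 := by
    have : f 0 ∈ univ.image e := by rw [hE]; exact hfS 0
    obtain ⟨x, -, hx⟩ := mem_image.1 this
    have h1 := hcyc.edge x
    rw [hx, hf 0] at h1
    have h2 : w 0 ∈ s(u x, u (x+1)) := by rw [← h1]; simp
    rw [Sym2.mem_iff] at h2
    rcases h2 with h2 | h2
    · have := hmin _ _ (by omega) (by have := x.val_lt; omega) h2
      omega
    · have := hmin _ _ (by omega) (by have := (x+1).val_lt; omega) h2
      omega
  refine ⟨p+1, inferInstance, u, e, hp, hcyc, hE, ?_, ?_⟩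
  · simp [u, hi, hw0]
  · simp only [u, hi]; rw [ZMod.val_one'' (by omega)]; simpa using hw1'


variable (V) in
abbrev Cyc (col : V → Bool) (m : ℕ) : Type :=
  {v : ZMod m → V // Function.Injective v ∧ (∀ i, col (v i) ≠ col (v (i+1))) ∧ col (v 0) = false}

lemma cyc_col {col : V → Bool} {m : ℕ} (v : Cyc V col m) (n : ℕ) :
    col (v.1 (n : ZMod m)) = decide (n % 2 = 1) := by
  induction n with
  | zero => simpa using v.2.2.2
  | succ n ih =>
    have := v.2.2.1 n
    rw [ih] at this
    push_cast
    rcases Nat.mod_two_eq_zero_or_one n with h | h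
    · have h' : (n+1) % 2 = 1 := by omega
      simp [h] at this
      simp [h', this]
    · have h' : (n+1) % 2 = 0 := by omega
      simp [h] at this
      simp [h', this]

lemma card_cyc {col : V → Bool} {n k : ℕ} (hk : 2 ≤ k)
    (h0 : Fintype.card {u // col u = false} = n) (h1 : Fintype.card {u // col u = true} = n) :
    Nat.card (Cyc V col (2*k)) = (n.descFactorial k)^2 := by
  have : NeZero (2*k) := ⟨by omega⟩
  have hc : Nat.card ((Fin k ↪ {u // col u = false}) × (Fin k ↪ {u // col u = true}))
      = (n.descFactorial k)^2 := by
    rw [Nat.card_eq_fintype_card, Fintype.card_prod, Fintype.card_embedding_eq,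
      Fintype.card_embedding_eq, h0, h1, Fintype.card_fin, sq]
  rw [← hc]
  have hv : ∀ a < 2 * k, ((a : ℕ) : ZMod (2*k)).val = a := fun a ha => ZMod.val_cast_of_lt ha
  have hcast : ∀ a b : ℕ, a < 2*k → b < 2*k → (a : ZMod (2*k)) = b → a = b := by
    intro a b ha hb hab
    rw [← hv a ha, ← hv b hb, hab]
  let F : Cyc V col (2*k) → (Fin k ↪ {u // col u = false}) × (Fin k ↪ {u // col u = true}) :=
    fun v => ⟨⟨fun a => ⟨v.1 ((2 * a.val : ℕ) : ZMod (2*k)), by rw [cyc_col v]; simp⟩, by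
        intro a b hab
        have := hcast _ _ (by omega) (by omega) (v.2.1 (Subtype.ext_iff.1 hab))
        exact Fin.ext (by omega)⟩,
      ⟨fun a => ⟨v.1 ((2 * a.val + 1 : ℕ) : ZMod (2*k)), by rw [cyc_col v]; simp⟩, by
        intro a b hab
        have := hcast _ _ (by omega) (by omega) (v.2.1 (Subtype.ext_iff.1 hab))
        exact Fin.ext (by omega)⟩⟩
  apply Nat.card_eq_of_bijective F
  constructor
  · intro v v' hvv
    have e1 := congrArg Prod.fst hvv
    have e2 := congrArg Prod.snd hvv
    apply Subtype.ext
    funext i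
    have hi := i.val_lt
    have hi' : ((i.val : ℕ) : ZMod (2*k)) = i := by simp
    rw [← hi']
    rcases Nat.mod_two_eq_zero_or_one i.val with h | h
    · have : v.1 ((2 * (i.val / 2) : ℕ) : ZMod (2*k)) = v'.1 ((2 * (i.val / 2) : ℕ) : ZMod (2*k)) :=
        Subtype.ext_iff.1 (DFunLike.congr_fun e1 ⟨i.val / 2, by omega⟩)
      rwa [show 2 * (i.val / 2) = i.val by omega] at this
    · have : v.1 ((2 * (i.val / 2) + 1 : ℕ) : ZMod (2*k)) = v'.1 ((2 * (i.val / 2) + 1 : ℕ) : ZMod (2*k)) :=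
        Subtype.ext_iff.1 (DFunLike.congr_fun e2 ⟨i.val / 2, by omega⟩)
      rwa [show 2 * (i.val / 2) + 1 = i.val by omega] at this
  · rintro ⟨f, g⟩
    have hlt : ∀ i : ZMod (2*k), i.val / 2 < k := fun i => by have := i.val_lt; omega
    let v : ZMod (2*k) → V := fun i =>
      if i.val % 2 = 0 then (f ⟨i.val / 2, hlt i⟩).1 else (g ⟨i.val / 2, hlt i⟩).1
    have hcol : ∀ i, col (v i) = decide (i.val % 2 = 1) := by
      intro i
      simp only [v]
      split_ifs with h
      · rw [(f _).2]; simp [h]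
      · rw [(g _).2]; simp; omega
    have hinj : Function.Injective v := by
      intro i j hij
      have hc : col (v i) = col (v j) := by rw [hij]
      rw [hcol, hcol, decide_eq_decide] at hc
      apply ZMod.val_injective
      simp only [v] at hij
      split_ifs at hij with h h' h'
      · have := Fin.ext_iff.1 (f.injective (Subtype.ext hij))
        simp only at this; omega
      · omega
      · omega
      · have := Fin.ext_iff.1 (g.injective (Subtype.ext hij))
        simp only at this; omega
    refine ⟨⟨v, hinj, ?_, ?_⟩, ?_⟩
    · intro i
      rw [hcol, hcol, Ne, decide_eq_decide, ZMod.val_add, ZMod.val_one'' (by omega),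
        Nat.mod_mod_of_dvd _ (by simp)]
      omega
    · rw [hcol]; simp
    · apply Prod.ext
      · ext a
        change v ((2 * a.val : ℕ) : ZMod (2*k)) = (f a).1
        simp only [v]
        have : ((2 * a.val : ℕ) : ZMod (2*k)).val = 2 * a.val := hv _ (by omega)
        simp only [this]
        simp
      · ext a
        change v ((2 * a.val + 1 : ℕ) : ZMod (2*k)) = (g a).1
        simp only [v]
        have : ((2 * a.val + 1 : ℕ) : ZMod (2*k)).val = 2 * a.val + 1 := hv _ (by omega)
        simp only [this]
        rw [if_neg (by omega)]
        congr 3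
        omega

lemma count_min {col : V → Bool} {n k : ℕ} (hk : 2 ≤ k)
    (h0 : Fintype.card {u // col u = false} = n) (h1 : Fintype.card {u // col u = true} = n)
    (hinj : Function.Injective ed) (hed : ∀ u v, (∃ c, ed c = s(u, v)) ↔ col u ≠ col v) :
    (n.descFactorial k)^2 = Nat.card {S : Finset C // MinSet ed S ∧ #S = 2*k} * (2 * k) := by
  classical
  have : NeZero (2*k) := ⟨by omega⟩
  have hm : 3 ≤ 2 * k := by omega
  rw [← card_cyc hk h0 h1]
  have hc : Nat.card (Σ S : {S : Finset C // MinSet ed S ∧ #S = 2*k}, {c // c ∈ S.1}) =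
      Nat.card {S : Finset C // MinSet ed S ∧ #S = 2*k} * (2 * k) := by
    rw [Nat.card_sigma, sum_congr rfl (g := fun _ => 2 * k), sum_const, card_univ,
      Nat.card_eq_fintype_card, smul_eq_mul]
    intro S _
    rw [Nat.card_eq_fintype_card, Fintype.card_coe, S.2.2]
  rw [← hc]
  have hex : ∀ v : Cyc V col (2*k), ∃ e, IsCyc ed v.1 e := by
    intro v
    choose e he using fun i => (hed _ _).2 (v.2.2.1 i)
    exact ⟨e, v.2.1, he⟩
  choose e he using hex
  let F : Cyc V col (2*k) → Σ S : {S : Finset C // MinSet ed S ∧ #S = 2*k}, {c // c ∈ S.1} :=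
    fun v => ⟨⟨univ.image (e v), (he v).min hm, (he v).card hm⟩, ⟨e v 0, by simp⟩⟩
  apply Nat.card_eq_of_bijective F
  have hF : ∀ v S, ∀ c : {c // c ∈ S.1}, F v = ⟨S, c⟩ ↔ univ.image (e v) = S.1 ∧ e v 0 = c.1 := by
    rintro v ⟨S, hS⟩ ⟨c, hc⟩
    constructor
    · intro h
      simp only [F, Sigma.mk.injEq, Subtype.mk.injEq] at h
      obtain ⟨rfl, h⟩ := h
      simpa using h
    · rintro ⟨h1, h2⟩
      simp only at h1 h2
      subst h1 h2
      rfl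
  have hcol1 : ∀ v : Cyc V col (2*k), col (v.1 1) = true := by
    intro v; simpa using cyc_col v 1
  have hends : ∀ a b a' b', col a = false → col b = true → col a' = false → col b' = true →
      s(a, b) = s(a', b') → a = a' ∧ b = b' := by
    intro a b a' b' ha hb ha' hb' h
    rcases Sym2.eq_iff.1 h with h | ⟨rfl, rfl⟩
    · exact h
    · simp_all
  constructor
  · intro v v' h
    have h := (hF v _ _).1 h
    simp only [F] at h
    obtain ⟨hE, h00⟩ := h
    have h2 := (he v).edge 0
    rw [h00, (he v').edge 0] at h2
    obtain ⟨a, b⟩ := hends _ _ _ _ v'.2.2.2 (by simpa using hcol1 v') v.2.2.2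
      (by simpa using hcol1 v) h2
    simp only [zero_add] at b
    exact Subtype.ext ((he v).unique (he v') hm hE a.symm b.symm)
  · rintro ⟨⟨S, hS, hcard⟩, ⟨c, hc⟩⟩
    have hab : ∃ a b, ed c = s(a, b) ∧ col a = false ∧ col b = true := by
      obtain ⟨⟨x, y⟩, h⟩ : ∃ z : V × V, ed c = s(z.1, z.2) := by
        induction h : ed c with | _ x y => exact ⟨(x, y), rfl⟩
      have := (hed x y).1 ⟨c, h⟩
      cases hx : col x <;> cases hy : col y
      · simp_all
      · exact ⟨x, y, h, hx, hy⟩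
      · exact ⟨y, x, by rw [h]; exact Sym2.eq_swap, hy, hx⟩
      · simp_all
    obtain ⟨a, b, hab, ha, hb⟩ := hab
    have hloop : ∀ c, ¬ (ed c).IsDiag := by
      intro c hd
      obtain ⟨⟨x, y⟩, h⟩ : ∃ z : V × V, ed c = s(z.1, z.2) := by
        induction h : ed c with | _ x y => exact ⟨(x, y), rfl⟩
      have := (hed x y).1 ⟨c, h⟩
      rw [h] at hd
      have hd : x = y := by simpa using hd
      exact this (by rw [hd])
    obtain ⟨p, hp, v, e', hp3, hcyc, hE, hv0, hv1⟩ := exists_cyc hinj hloop hS hc hab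
    have : p = 2 * k := by rw [← hcard, ← hE, hcyc.card hp3]
    subst this
    let v' : Cyc V col (2*k) := ⟨v, hcyc.inj, fun i => (hed _ _).1 ⟨_, hcyc.edge i⟩, by rw [hv0, ha]⟩
    have hee : e v' = e' := by
      funext i
      apply hinj
      rw [(he v').edge, hcyc.edge]
    refine ⟨v', (hF _ _ _).2 ⟨?_, ?_⟩⟩
    · rw [hee]; convert hE
    · rw [hee]; apply hinj; rw [hcyc.edge, hab, hv0, zero_add, hv1]

end cyc

section fin

def edb (t : ℕ) (c : colIdx t) : Sym2 (Fin (4*t)) := s(c.1.1, c.1.2)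

def colb (t : ℕ) (u : Fin (4*t)) : Bool := decide (u.val % 2 = 1)

def supp {t : ℕ} (x : colIdx t → ZMod 2) : Finset (colIdx t) := univ.filter fun c => x c ≠ 0

def indi {t : ℕ} (S : Finset (colIdx t)) : colIdx t → ZMod 2 := fun c => if c ∈ S then 1 else 0

lemma supp_indi {t : ℕ} (S : Finset (colIdx t)) : supp (indi S) = S := by
  ext c; simp [supp, indi]

lemma zmod2 (a : ZMod 2) : a = 0 ∨ a = 1 := by
  revert a; decide

lemma indi_supp {t : ℕ} (x : colIdx t → ZMod 2) : indi (supp x) = x := by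
  funext c
  rcases zmod2 (x c) with h | h <;> simp [supp, indi, h]

lemma supp_inj {t : ℕ} {x y : colIdx t → ZMod 2} (h : supp x = supp y) : x = y := by
  rw [← indi_supp x, h, indi_supp]

lemma supp_nonempty {t : ℕ} {x : colIdx t → ZMod 2} : (supp x).Nonempty ↔ x ≠ 0 := by
  rw [Function.ne_iff]
  simp [supp, Finset.Nonempty]

lemma ker_iff {t : ℕ} (x : colIdx t → ZMod 2) : Hb t *ᵥ x = 0 ↔ EvenSet (edb t) (supp x) := by
  rw [funext_iff]
  apply forall_congr'
  intro r
  rw [← ZMod.natCast_eq_zero_iff_even, ← sum_boole]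
  have : (Hb t *ᵥ x) r = ∑ c ∈ supp x, if r ∈ edb t c then (1 : ZMod 2) else 0 := by
    rw [supp, sum_filter, Matrix.mulVec, dotProduct]
    apply sum_congr rfl
    intro c _
    rcases zmod2 (x c) with h | h <;> simp [Hb, edb, h]
  rw [this]
  rfl

lemma irred_iff {t : ℕ} (x : colIdx t → ZMod 2) : Irred t x ↔ MinSet (edb t) (supp x) := by
  unfold Irred MinSet
  rw [ker_iff, supp_nonempty]
  refine and_congr_right fun hx => and_congr_right fun hx0 => ?_
  constructor
  · intro h T hT hne hev
    by_contra hTS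
    apply h
    have ha : Hb t *ᵥ indi T = 0 := by rw [ker_iff, supp_indi]; exact hev
    refine ⟨indi T, x - indi T, ha, ?_, ?_, ?_, ?_, by abel⟩
    · rw [Matrix.mulVec_sub, ha, (ker_iff x).2 hx, sub_zero]
    · rw [← supp_nonempty, supp_indi]; exact hne
    · intro h0
      rw [sub_eq_zero] at h0
      apply hTS
      rw [h0, supp_indi]
    · intro c
      by_cases hc : c ∈ T
      · right
        have := hT hc
        simp only [supp, mem_filter, mem_univ, true_and] at this
        rcases zmod2 (x c) with h | h
        · exact absurd h this
        · simp [indi, hc, h]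
      · left; simp [indi, hc]
  · rintro h ⟨a, b, ha, hb, ha0, hb0, hd, rfl⟩
    have h1 := h (supp a) ?_ (supp_nonempty.2 ha0) ((ker_iff a).1 ha)
    · have := supp_inj h1
      exact hb0 (by simpa using this)
    · intro c hc
      simp only [supp, mem_filter, mem_univ, true_and, Pi.add_apply] at hc ⊢
      rcases hd c with h | h
      · exact absurd h hc
      · simpa [h] using hc

lemma edb_inj (t : ℕ) : Function.Injective (edb t) := by
  rintro ⟨⟨a, b⟩, h, h'⟩ ⟨⟨c, d⟩, k, k'⟩ he
  simp only [edb, Sym2.eq_iff] at he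
  simp only at h k
  rcases he with ⟨rfl, rfl⟩ | ⟨rfl, rfl⟩
  · rfl
  · exact absurd h (not_lt.2 k.le)

lemma edb_ex (t : ℕ) (u v : Fin (4*t)) : (∃ c, edb t c = s(u, v)) ↔ colb t u ≠ colb t v := by
  have key : ∀ a b : Fin (4*t), a < b → (Odd (b.val - a.val) ↔ colb t a ≠ colb t b) := by
    intro a b hab
    rw [Fin.lt_def] at hab
    rw [Nat.odd_iff, colb, colb, Ne, decide_eq_decide]
    omega
  constructor
  · rintro ⟨⟨⟨a, b⟩, h, h'⟩, he⟩
    simp only [edb, Sym2.eq_iff] at he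
    have := (key _ _ h).1 h'
    rcases he with ⟨rfl, rfl⟩ | ⟨rfl, rfl⟩
    · exact this
    · exact this.symm
  · intro h
    rcases lt_trichotomy u v with hl | rfl | hl
    · exact ⟨⟨(u, v), hl, (key _ _ hl).2 h⟩, rfl⟩
    · exact absurd rfl h
    · exact ⟨⟨(v, u), hl, (key _ _ hl).2 h.symm⟩, Sym2.eq_swap⟩

lemma card_col (t : ℕ) (b : Bool) : Fintype.card {u // colb t u = b} = 2 * t := by
  have hb := Bool.toNat_lt b
  rw [← Nat.card_eq_fintype_card, ← Nat.card_fin (2*t)]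
  symm
  let F : Fin (2*t) → {u // colb t u = b} := fun i => ⟨⟨2 * i.val + b.toNat, by omega⟩, by
    cases b <;> simp [colb] <;> omega⟩
  apply Nat.card_eq_of_bijective F
  constructor
  · intro i j h
    have : 2 * i.val + b.toNat = 2 * j.val + b.toNat := Fin.ext_iff.1 (Subtype.ext_iff.1 h)
    exact Fin.ext (by omega)
  · rintro ⟨u, hu⟩
    refine ⟨⟨u.val / 2, by omega⟩, ?_⟩
    apply Subtype.ext
    apply Fin.ext
    simp only [F]
    cases b <;> simp [colb] at hu ⊢ <;> omega

lemma card_irred (t m : ℕ) : Set.ncard {x : colIdx t → ZMod 2 | Irred t x ∧ wt x = m} =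
    Nat.card {S : Finset (colIdx t) // MinSet (edb t) S ∧ #S = m} := by
  rw [← Nat.card_coe_set_eq]
  apply Nat.card_eq_of_bijective
    (fun x => ⟨supp x.1, (irred_iff _).1 x.2.1, x.2.2⟩ :
      {x : colIdx t → ZMod 2 | Irred t x ∧ wt x = m} →
        {S : Finset (colIdx t) // MinSet (edb t) S ∧ #S = m})
  constructor
  · intro x y h
    exact Subtype.ext (supp_inj (Subtype.ext_iff.1 h))
  · rintro ⟨S, h1, h2⟩
    refine ⟨⟨indi S, ?_, ?_⟩, ?_⟩
    · rw [irred_iff, supp_indi]; exact h1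
    · change #(supp (indi S)) = m
      rw [supp_indi]; exact h2
    · exact Subtype.ext (supp_indi S)

end fin

/-- For each even `m` with `4 ≤ m ≤ 4t`, the number of irreducible codewords of
weight `m` in `C_b` equals `(1/m)·∏_{i=0}^{m/2−1} (2t − i)²`. -/
theorem stmt_9 (t : ℕ) (ht : 2 ≤ t) (m : ℕ) (hm : Even m) (hm4 : 4 ≤ m) (hmt : m ≤ 4 * t) :
    m ∣ (∏ i ∈ Finset.range (m / 2), (2 * t - i) ^ 2) ∧
    Set.ncard {x : colIdx t → ZMod 2 | Irred t x ∧ wt x = m} =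
      (∏ i ∈ Finset.range (m / 2), (2 * t - i) ^ 2) / m := by
  obtain ⟨k, rfl⟩ := hm
  have hk : 2 ≤ k := by omega
  have h := count_min hk (card_col t false) (card_col t true) (edb_inj t) (edb_ex t)
  have h2 : (k + k) / 2 = k := by omega
  rw [h2, Finset.prod_pow, ← Nat.descFactorial_eq_prod_range, h, card_irred, ← two_mul]
  exact ⟨dvd_mul_left _ _, (Nat.mul_div_cancel _ (by omega)).symm⟩
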